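/- arXiv:2509.14845 — 2 statements merged into one kernel-verified Lean document; each statement's English description precedes it below -/
import Mathlib

section
/- Let d ≥ 2 and γ ∈ ℝ with -d < γ. Define the matrix a(z) = |z|^{γ+2}(Id - ẑ⊗ẑ) for z ∈ ℝᵈ\{0\}, where ẑ = z/|z|, and let A(v) = ∫_{ℝᵈ} a(v-w) μ(w) dw where μ(w) = (2π)^{-d/2} exp(-|w|²/2). Then for v = r·e_d with r > 0, A(r e_d) is a diagonal matrix whose off-diagonal entries vanish, whose first d-1 diagonal entries are all equal and comparable to ⟨r⟩^{γ+2}, and whose last diagonal entry is comparable to ⟨r⟩^γ. -/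
open MeasureTheory Real Set

/-- The standard Maxwellian (Gaussian) on `ℝᵈ`. -/
noncomputable def stdGaussian (d : ℕ) (w : EuclideanSpace ℝ (Fin d)) : ℝ :=
  (2 * Real.pi) ^ (-(d : ℝ) / 2) * Real.exp (-‖w‖ ^ 2 / 2)

/-- The Landau diffusion matrix `A(v) = ∫ |v-w|^{γ+2}(Id - ẑ⊗ẑ)|_{z=v-w} μ(w) dw`. -/
noncomputable def landauA (d : ℕ) (γ : ℝ) (v : EuclideanSpace ℝ (Fin d)) :
    Matrix (Fin d) (Fin d) ℝ :=
  Matrix.of fun i j => ∫ w : EuclideanSpace ℝ (Fin d),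
    ‖v - w‖ ^ (γ + 2) *
      ((if i = j then (1:ℝ) else 0) - (v - w) i * (v - w) j / ‖v - w‖ ^ 2) *
      stdGaussian d w


lemma aux_pt (s a b c : ℝ) (ha : 0 < a) (hb : 1 ≤ b) (hc : 1 ≤ c) (h1 : a ≤ b + c)
    (h2 : b ≤ 1 + a + c) :
    a ^ s ≤ 3 ^ |s| * b ^ s * c ^ |s| * (1 + (Set.Iio (1:ℝ)).indicator (fun t => t ^ s) a) := by
  have hb0 : 0 < b := by linarith
  have hc0 : 0 < c := by linarith
  have hind : 0 ≤ (Set.Iio (1:ℝ)).indicator (fun t => t ^ s) a := by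
    rw [Set.indicator_apply]; split_ifs
    · positivity
    · exact le_rfl
  rcases le_or_gt 0 s with hs | hs
  · rw [abs_of_nonneg hs]
    have h3 : a ≤ 3 * b * c := by nlinarith
    have h4 : a ^ s ≤ (3 * b * c) ^ s := Real.rpow_le_rpow ha.le h3 hs
    rw [Real.mul_rpow (by positivity) hc0.le, Real.mul_rpow (by positivity) hb0.le] at h4
    refine h4.trans ?_
    exact le_mul_of_one_le_right (by positivity) (by linarith)
  · rw [abs_of_neg hs]
    have key : ∀ m : ℝ, 0 < m → b ≤ 3 * m * c → m ^ s ≤ 3 ^ (-s) * b ^ s * c ^ (-s) := by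
      intro m hm h
      have h4 : (3 * m * c) ^ s ≤ b ^ s := Real.rpow_le_rpow_of_nonpos hb0 h hs.le
      rw [Real.mul_rpow (by positivity) hc0.le, Real.mul_rpow (by positivity) hm.le] at h4
      have e3 : (3:ℝ) ^ (-s) * 3 ^ s = 1 := by rw [← Real.rpow_add (by norm_num)]; simp
      have ec : c ^ (-s) * c ^ s = 1 := by rw [← Real.rpow_add hc0]; simp
      have h5 := mul_le_mul_of_nonneg_left h4 (show 0 ≤ (3:ℝ) ^ (-s) * c ^ (-s) by positivity)
      calc m ^ s = (3 ^ (-s) * 3 ^ s) * (c ^ (-s) * c ^ s) * m ^ s := by rw [e3, ec]; ring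
        _ = 3 ^ (-s) * c ^ (-s) * (3 ^ s * m ^ s * c ^ s) := by ring
        _ ≤ _ := h5
        _ = _ := by ring
    rcases lt_or_ge a 1 with h | h
    · rw [Set.indicator_of_mem (show a ∈ Set.Iio (1:ℝ) from h)]
      have := key 1 one_pos (by linarith)
      rw [Real.one_rpow] at this
      have ha' : 0 < a ^ s := by positivity
      nlinarith
    · rw [Set.indicator_of_notMem (by simpa using h)]
      have := key a ha (by nlinarith)
      simpa using this

lemma aux_exp (p x : ℝ) (hp : 0 < p) (hx : 0 ≤ x) :
    x ^ p ≤ (4 * p) ^ p * Real.exp (x / 4) := by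
  have h := Real.add_one_le_exp (x / (4 * p))
  have h1 : x ≤ 4 * p * Real.exp (x / (4 * p)) := by
    have : x = 4 * p * (x / (4*p)) := by field_simp
    calc x = 4 * p * (x / (4*p)) := this
      _ ≤ _ := by gcongr; linarith
  calc x ^ p ≤ (4 * p * Real.exp (x / (4 * p))) ^ p := Real.rpow_le_rpow hx h1 hp.le
    _ = _ := by
      rw [Real.mul_rpow (by positivity) (by positivity), ← Real.exp_mul]
      congr 2; field_simp

lemma aux_gauss (n : ℕ) : Integrable (fun w : EuclideanSpace ℝ (Fin n) => Real.exp (-‖w‖^2/4)) := by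
  have := (GaussianFourier.integrable_cexp_neg_mul_sq_norm_add (V := EuclideanSpace ℝ (Fin n))
    (b := 1/4) (by norm_num) 0 0).norm
  refine this.congr (Filter.Eventually.of_forall fun w => ?_)
  simp only [Complex.norm_exp]
  congr 1
  have : (-(1/4) * (‖w‖:ℂ)^2 + 0 * ((inner ℝ 0 w : ℝ):ℂ)) = ((-‖w‖^2/4 : ℝ) : ℂ) := by push_cast; ring
  rw [this, Complex.ofReal_re]

lemma aux_ind (n : ℕ) (s : ℝ) (hs : -((n:ℝ)+1) < s) :
    Integrable (fun w : EuclideanSpace ℝ (Fin (n+1)) =>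
      (Set.Iio (1:ℝ)).indicator (fun t => t ^ s) ‖w‖) := by
  rw [integrable_fun_norm_addHaar (μ := volume) (f := (Set.Iio (1:ℝ)).indicator (fun t => t ^ s))]
  simp only [finrank_euclideanSpace, Fintype.card_fin, Nat.add_sub_cancel, smul_eq_mul]
  have h : IntegrableOn (fun x : ℝ => x ^ ((n:ℝ) + s)) (Ioo 0 1) := by
    rw [intervalIntegral.integrableOn_Ioo_rpow_iff one_pos]; linarith
  rw [← integrable_indicator_iff measurableSet_Ioo] at h
  rw [← integrable_indicator_iff measurableSet_Ioi]
  refine h.congr (Filter.Eventually.of_forall fun x => ?_)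
  by_cases h0 : 0 < x <;> by_cases h1 : x < 1 <;> simp [Set.indicator_apply, h0, h1]
  rw [Real.rpow_add h0, Real.rpow_natCast]

lemma aux_jb (x : ℝ) (hx : 0 ≤ x) : x ≤ √(1 + x^2) ∧ 1 ≤ √(1+x^2) ∧ √(1+x^2) ≤ 1 + x := by
  refine ⟨Real.le_sqrt_of_sq_le (by linarith), Real.le_sqrt_of_sq_le (by nlinarith), ?_⟩
  rw [Real.sqrt_le_left (by linarith)]; nlinarith

lemma aux_gmeas (n : ℕ) : Measurable (stdGaussian n) := by
  unfold stdGaussian; fun_prop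

lemma aux_key (n : ℕ) (s : ℝ) (hs : -((n:ℝ)+1) < s) :
    ∃ C : ℝ, 0 < C ∧ ∀ v : EuclideanSpace ℝ (Fin (n+1)),
      Integrable (fun w => ‖v - w‖ ^ s * (1 + ‖w‖^2) * stdGaussian (n+1) w) ∧
      ∫ w, ‖v - w‖ ^ s * (1 + ‖w‖^2) * stdGaussian (n+1) w ≤ C * √(1 + ‖v‖^2) ^ s := by
  set p : ℝ := |s| / 2 + 1 with hp
  have hp0 : 0 < p := by positivity
  set G : ℝ := (2 * π) ^ (-((n+1 : ℕ):ℝ)/2) with hG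
  have hG0 : 0 < G := by positivity
  set K : ℝ := 3 ^ |s| * ((4*p)^p * Real.exp (1/4)) * G with hK
  have hK0 : 0 < K := by positivity
  set ind : ℝ → ℝ := (Set.Iio (1:ℝ)).indicator (fun t => t ^ s) with hind
  have hind0 : ∀ t, 0 ≤ t → 0 ≤ ind t := by
    intro t ht; rw [hind, Set.indicator_apply]; split_ifs
    · positivity
    · exact le_rfl
  have hi1 := aux_gauss (n+1)
  have hi2 := aux_ind n s hs
  set I1 := ∫ w : EuclideanSpace ℝ (Fin (n+1)), Real.exp (-‖w‖^2/4)
  set I2 := ∫ w : EuclideanSpace ℝ (Fin (n+1)), ind ‖w‖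
  have hI1 : 0 ≤ I1 := integral_nonneg fun w => (Real.exp_pos _).le
  have hI2 : 0 ≤ I2 := integral_nonneg fun w => hind0 _ (norm_nonneg _)
  refine ⟨K * (I1 + I2 + 1), by positivity, fun v => ?_⟩
  have hi3 : Integrable (fun w => ind ‖v - w‖) := hi2.comp_sub_left v
  have hI3 : ∫ w, ind ‖v - w‖ = I2 := integral_sub_left_eq_self (fun w => ind ‖w‖) volume v
  have hbi : Integrable (fun w => K * √(1 + ‖v‖^2) ^ s * (Real.exp (-‖w‖^2/4) + ind ‖v - w‖)) :=
    (hi1.add hi3).const_mul _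
  have hae : ∀ᵐ w : EuclideanSpace ℝ (Fin (n+1)), w ≠ v := by
    simp [ae_iff, measure_singleton]
  have hg0 : ∀ w, 0 ≤ ‖v - w‖ ^ s * (1 + ‖w‖^2) * stdGaussian (n+1) w := by
    intro w; unfold stdGaussian; positivity
  have hle : ∀ᵐ w, ‖v - w‖ ^ s * (1 + ‖w‖^2) * stdGaussian (n+1) w ≤
      K * √(1 + ‖v‖^2) ^ s * (Real.exp (-‖w‖^2/4) + ind ‖v - w‖) := by
    filter_upwards [hae] with w hw
    have hz : 0 < ‖v - w‖ := norm_pos_iff.2 (sub_ne_zero.2 hw.symm)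
    obtain ⟨v1, v2, v3⟩ := aux_jb ‖v‖ (norm_nonneg _)
    obtain ⟨w1, w2, w3⟩ := aux_jb ‖w‖ (norm_nonneg _)
    have t1 : ‖v - w‖ ≤ ‖v‖ + ‖w‖ := norm_sub_le _ _
    have t2 : ‖v‖ ≤ ‖v - w‖ + ‖w‖ := by simpa using norm_add_le (v - w) w
    have hpt := aux_pt s ‖v - w‖ (√(1 + ‖v‖^2)) (√(1+‖w‖^2)) hz v2 w2 (by linarith) (by linarith)
    have hE : √(1+‖w‖^2) ^ |s| * (1 + ‖w‖^2) = (1+‖w‖^2) ^ p := by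
      rw [hp, Real.rpow_add (by positivity), Real.rpow_one, Real.sqrt_eq_rpow,
        ← Real.rpow_mul (by positivity)]
      congr 2; ring
    have hE2 := aux_exp p (1+‖w‖^2) hp0 (by positivity)
    have hE3 : Real.exp ((1+‖w‖^2)/4) * Real.exp (-‖w‖^2/2) = Real.exp (1/4) * Real.exp (-‖w‖^2/4) := by
      rw [← Real.exp_add, ← Real.exp_add]; congr 1; ring
    have hi := hind0 _ hz.le
    have hexp1 : Real.exp (-‖w‖^2/4) ≤ 1 := Real.exp_le_one_iff.2 (by nlinarith [sq_nonneg ‖w‖])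
    unfold stdGaussian
    rw [← hG]
    set X := √(1 + ‖v‖^2) ^ s
    have hX : 0 ≤ X := by positivity
    calc ‖v - w‖ ^ s * (1 + ‖w‖^2) * (G * Real.exp (-‖w‖^2/2))
        ≤ (3 ^ |s| * X * √(1+‖w‖^2) ^ |s| * (1 + ind ‖v - w‖)) * (1 + ‖w‖^2) * (G * Real.exp (-‖w‖^2/2)) := by
          gcongr
      _ = 3 ^ |s| * X * G * (1 + ind ‖v - w‖) * ((√(1+‖w‖^2) ^ |s| * (1 + ‖w‖^2)) * Real.exp (-‖w‖^2/2)) := by ring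
      _ ≤ 3 ^ |s| * X * G * (1 + ind ‖v - w‖) * (((4 * p) ^ p * Real.exp ((1+‖w‖^2) / 4)) * Real.exp (-‖w‖^2/2)) := by
          rw [hE]; gcongr
      _ = K * X * (Real.exp (-‖w‖^2/4) + Real.exp (-‖w‖^2/4) * ind ‖v - w‖) := by
          rw [mul_assoc ((4*p)^p), hE3, hK]; ring
      _ ≤ _ := by
          gcongr
          exact mul_le_of_le_one_left hi hexp1
  have hm : Measurable (fun w => ‖v - w‖ ^ s * (1 + ‖w‖^2) * stdGaussian (n+1) w) := by
    have := aux_gmeas (n+1)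
    fun_prop
  refine ⟨hbi.mono' hm.aestronglyMeasurable ?_, ?_⟩
  · filter_upwards [hle] with w hw
    rw [Real.norm_of_nonneg (hg0 w)]; exact hw
  · refine (integral_mono_of_nonneg (Filter.Eventually.of_forall hg0) hbi hle).trans ?_
    rw [integral_const_mul, integral_add hi1 hi3, hI3]
    have hX : 0 ≤ √(1 + ‖v‖^2) ^ s := by positivity
    calc K * √(1 + ‖v‖^2) ^ s * (I1 + I2) ≤ K * √(1 + ‖v‖^2) ^ s * (I1 + I2 + 1) := by
          exact mul_le_mul_of_nonneg_left (by linarith) (by positivity)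
      _ = _ := by ring

lemma aux_sym (n : ℕ) (L : EuclideanSpace ℝ (Fin n) ≃ₗᵢ[ℝ] EuclideanSpace ℝ (Fin n))
    (v : EuclideanSpace ℝ (Fin n)) (hv : L v = v) (f : EuclideanSpace ℝ (Fin n) → ℝ) :
    ∫ w, f (v - w) * stdGaussian n w = ∫ w, f (L (v - w)) * stdGaussian n w := by
  rw [← MeasurePreserving.integral_comp L.measurePreserving L.toHomeomorph.measurableEmbedding]
  refine integral_congr_ae (Filter.Eventually.of_forall fun w => ?_)
  simp [stdGaussian, map_sub, hv]

lemma aux_offdiag (n : ℕ) (γ : ℝ) (v : EuclideanSpace ℝ (Fin n)) (i j k : Fin n) (hij : i ≠ j)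
    (hk : k = i ∨ k = j) (hv : v k = 0) : landauA n γ v i j = 0 := by
  set L : EuclideanSpace ℝ (Fin n) ≃ₗᵢ[ℝ] EuclideanSpace ℝ (Fin n) :=
    LinearIsometryEquiv.piLpCongrRight 2 (fun l =>
      if l = k then LinearIsometryEquiv.neg ℝ else LinearIsometryEquiv.refl ℝ ℝ) with hL
  have hLk : ∀ x, (L x) k = - x k := by intro x; simp [hL]
  have hLl : ∀ x l, l ≠ k → (L x) l = x l := by intro x l hl; simp [hL, hl]
  have hLv : L v = v := by
    ext l
    by_cases h : l = k
    · subst h; rw [hLk, hv, neg_zero]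
    · rw [hLl _ _ h]
  have h := aux_sym n L v hLv
    (fun z => ‖z‖ ^ (γ + 2) * ((if i = j then (1:ℝ) else 0) - z i * z j / ‖z‖ ^ 2))
  have hneg : ∀ z, (L z) i * (L z) j = - (z i * z j) := by
    intro z
    rcases hk with rfl | rfl
    · rw [hLk, hLl _ _ hij.symm]; ring
    · rw [hLk, hLl _ _ hij]; ring
  simp only [hneg, LinearIsometryEquiv.norm_map, if_neg hij] at h
  simp only [landauA, Matrix.of_apply, if_neg hij]
  have h2 : ∀ a b c : ℝ, a * (0 - -b / c) = - (a * (0 - b / c)) := by intros; ring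
  simp only [h2, neg_mul] at h
  rw [integral_neg] at h
  linarith

lemma aux_diag (n : ℕ) (γ : ℝ) (v : EuclideanSpace ℝ (Fin n)) (i j : Fin n)
    (hi : v i = 0) (hj : v j = 0) : landauA n γ v i i = landauA n γ v j j := by
  set L : EuclideanSpace ℝ (Fin n) ≃ₗᵢ[ℝ] EuclideanSpace ℝ (Fin n) :=
    LinearIsometryEquiv.piLpCongrLeft 2 ℝ ℝ (Equiv.swap i j) with hL
  have hLa : ∀ x l, (L x) l = x (Equiv.swap i j l) := by
    intro x l
    simp [hL, LinearIsometryEquiv.piLpCongrLeft_apply, Equiv.piCongrLeft']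
  have hLv : L v = v := by
    ext l
    rw [hLa]
    by_cases h1 : l = i
    · subst h1; rw [Equiv.swap_apply_left, hi, hj]
    by_cases h2 : l = j
    · subst h2; rw [Equiv.swap_apply_right, hi, hj]
    rw [Equiv.swap_apply_of_ne_of_ne h1 h2]
  have h := aux_sym n L v hLv
    (fun z => ‖z‖ ^ (γ + 2) * (1 - z i * z i / ‖z‖ ^ 2))
  simp only [hLa, LinearIsometryEquiv.norm_map, Equiv.swap_apply_left] at h
  simpa only [landauA, Matrix.of_apply, if_true] using h

lemma aux_two (n : ℕ) (z : EuclideanSpace ℝ (Fin n)) (i k : Fin n) (h : i ≠ k) :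
    z i ^ 2 + z k ^ 2 ≤ ‖z‖ ^ 2 := by
  rw [EuclideanSpace.real_norm_sq_eq, ← Finset.sum_pair (f := fun l => z l ^ 2) h]
  exact Finset.sum_le_sum_of_subset_of_nonneg (Finset.subset_univ _) fun _ _ _ => sq_nonneg _

lemma aux_one (n : ℕ) (z : EuclideanSpace ℝ (Fin n)) (i : Fin n) : z i ^ 2 ≤ ‖z‖ ^ 2 := by
  rw [EuclideanSpace.real_norm_sq_eq]
  exact Finset.single_le_sum (f := fun l => z l ^ 2) (fun _ _ => sq_nonneg _) (Finset.mem_univ i)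

lemma aux_abs (n : ℕ) (z : EuclideanSpace ℝ (Fin n)) (i : Fin n) : |z i| ≤ ‖z‖ :=
  abs_le_of_sq_le_sq (aux_one n z i) (norm_nonneg _)

lemma aux_entry (n : ℕ) (γ : ℝ) (z : EuclideanSpace ℝ (Fin n)) (i : Fin n) (hz : 0 < ‖z‖) :
    ‖z‖ ^ (γ + 2) * (1 - z i * z i / ‖z‖ ^ 2) = ‖z‖ ^ γ * (‖z‖ ^ 2 - z i ^ 2) := by
  rw [Real.rpow_add hz, Real.rpow_two]
  field_simp

lemma aux_gpos (n : ℕ) (w : EuclideanSpace ℝ (Fin n)) : 0 < stdGaussian n w := by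
  unfold stdGaussian; positivity

lemma aux_bounds (n : ℕ) (z : EuclideanSpace ℝ (Fin n)) (i : Fin n) :
    0 ≤ 1 - z i * z i / ‖z‖ ^ 2 ∧ 1 - z i * z i / ‖z‖ ^ 2 ≤ 1 := by
  have h1 := aux_one n z i
  have h2 : z i * z i / ‖z‖ ^ 2 ≤ 1 := div_le_one_of_le₀ (by nlinarith) (by positivity)
  have h3 : 0 ≤ z i * z i / ‖z‖ ^ 2 := div_nonneg (mul_self_nonneg _) (by positivity)
  constructor <;> linarith

lemma aux_rpow_lower (γ x a : ℝ) (hx : 0 < x) (h1 : x ≤ a) (h2 : a ≤ 10 * x) :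
    10 ^ (-|γ|) * x ^ γ ≤ a ^ γ := by
  rcases le_or_gt 0 γ with h | h
  · have h3 : x ^ γ ≤ a ^ γ := Real.rpow_le_rpow hx.le h1 h
    have h4 : (10:ℝ) ^ (-|γ|) ≤ 1 := Real.rpow_le_one_of_one_le_of_nonpos (by norm_num) (by simp)
    exact (mul_le_of_le_one_left (by positivity) h4).trans h3
  · rw [abs_of_neg h, neg_neg, ← Real.mul_rpow (by norm_num) hx.le]
    exact Real.rpow_le_rpow_of_nonpos (by linarith) h2 h.le

lemma aux_setlower {n : ℕ} (f : EuclideanSpace ℝ (Fin n) → ℝ) (hf : Integrable f) (h0 : ∀ w, 0 ≤ f w)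
    (p : EuclideanSpace ℝ (Fin n)) (c : ℝ) (h : ∀ w ∈ Metric.ball p 1, c ≤ f w) :
    c * volume.real (Metric.ball p 1) ≤ ∫ w, f w := by
  calc c * volume.real (Metric.ball p 1) = ∫ _ in Metric.ball p 1, c := by
        rw [setIntegral_const, smul_eq_mul, mul_comm]
    _ ≤ ∫ w in Metric.ball p 1, f w :=
        setIntegral_mono_on (integrableOn_const measure_ball_lt_top.ne) hf.integrableOn
          measurableSet_ball h
    _ ≤ _ := setIntegral_le_integral hf (Filter.Eventually.of_forall h0)

/-- For `v = r e_d`, `r > 0`, the Landau diffusion matrix `A(r e_d)` is diagonal, its first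
`d-1` diagonal entries coincide and are comparable to `⟨r⟩^{γ+2}`, and the last diagonal
entry is comparable to `⟨r⟩^γ` (here the ambient dimension is `d+1 ≥ 2`). -/
theorem stmt7 (d : ℕ) (hd : 1 ≤ d) (γ : ℝ) (hγ : -((d:ℝ) + 1) < γ) :
    ∃ c₁ c₂ : ℝ, 0 < c₁ ∧ 0 < c₂ ∧ ∀ r : ℝ, 0 < r →
      (∀ i j : Fin (d+1), i ≠ j →
          landauA (d+1) γ (r • EuclideanSpace.single (Fin.last d) 1) i j = 0) ∧
      (∀ i j : Fin (d+1), i ≠ Fin.last d → j ≠ Fin.last d →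
          landauA (d+1) γ (r • EuclideanSpace.single (Fin.last d) 1) i i =
            landauA (d+1) γ (r • EuclideanSpace.single (Fin.last d) 1) j j) ∧
      (∀ i : Fin (d+1), i ≠ Fin.last d →
          c₁ * Real.sqrt (1 + r ^ 2) ^ (γ + 2) ≤
              landauA (d+1) γ (r • EuclideanSpace.single (Fin.last d) 1) i i ∧
            landauA (d+1) γ (r • EuclideanSpace.single (Fin.last d) 1) i i ≤
              c₂ * Real.sqrt (1 + r ^ 2) ^ (γ + 2)) ∧
      (c₁ * Real.sqrt (1 + r ^ 2) ^ γ ≤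
          landauA (d+1) γ (r • EuclideanSpace.single (Fin.last d) 1)
            (Fin.last d) (Fin.last d) ∧
        landauA (d+1) γ (r • EuclideanSpace.single (Fin.last d) 1)
            (Fin.last d) (Fin.last d) ≤
          c₂ * Real.sqrt (1 + r ^ 2) ^ γ) := by
  obtain ⟨C1, hC1, H1⟩ := aux_key d γ hγ
  obtain ⟨C2, hC2, H2⟩ := aux_key d (γ + 2) (by linarith)
  have h0l : (0 : Fin (d+1)) ≠ Fin.last d := by
    intro h
    have := congrArg Fin.val h
    simp at this
    omega
  set p : EuclideanSpace ℝ (Fin (d+1)) :=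
    EuclideanSpace.single 0 2 - EuclideanSpace.single (Fin.last d) 2 with hp
  have hpn : ‖p‖ ≤ 4 := by
    refine (norm_sub_le _ _).trans ?_
    simp only [PiLp.norm_single]; norm_num
  have hp0 : p 0 = 2 := by simp [hp, h0l]
  have hpl : p (Fin.last d) = -2 := by simp [hp, h0l.symm]
  set m : ℝ := (2 * π) ^ (-((d+1 : ℕ):ℝ)/2) * Real.exp (-25/2) with hm
  have hm0 : 0 < m := by positivity
  have hvol : 0 < volume.real (Metric.ball p 1) :=
    ENNReal.toReal_pos (Metric.measure_ball_pos volume p one_pos).ne' measure_ball_lt_top.ne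
  have h10 : (0:ℝ) < 10 ^ (-|γ|) := by positivity
  refine ⟨10 ^ (-|γ|) * m * volume.real (Metric.ball p 1), C1 + C2, by positivity, by positivity,
    fun r hr => ?_⟩
  set v : EuclideanSpace ℝ (Fin (d+1)) := r • EuclideanSpace.single (Fin.last d) 1 with hv
  have hvi : ∀ i, i ≠ Fin.last d → v i = 0 := by intro i hi; simp [hv, hi]
  have hvl : v (Fin.last d) = r := by simp [hv]
  have hvn : ‖v‖ = r := by simp [hv, norm_smul, abs_of_pos hr]
  obtain ⟨r1, r2, r3⟩ := aux_jb r hr.le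
  set J := √(1 + r ^ 2) with hJ
  have hJ0 : 0 < J := by linarith
  have hJ2 : J ^ (γ + 2) = J ^ γ * J ^ 2 := by rw [Real.rpow_add hJ0, Real.rpow_two]
  -- the integrand on the diagonal
  set F : Fin (d+1) → EuclideanSpace ℝ (Fin (d+1)) → ℝ := fun i w =>
    ‖v - w‖ ^ (γ + 2) * (1 - (v - w) i * (v - w) i / ‖v - w‖ ^ 2) * stdGaussian (d+1) w with hF
  have hA : ∀ i, landauA (d+1) γ v i i = ∫ w, F i w := by
    intro i; simp [landauA, hF]
  have hF0 : ∀ i w, 0 ≤ F i w := fun i w =>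
    mul_nonneg (mul_nonneg (by positivity) (aux_bounds _ _ i).1) (aux_gpos _ w).le
  have hFle : ∀ i w, F i w ≤ ‖v - w‖ ^ (γ + 2) * (1 + ‖w‖^2) * stdGaussian (d+1) w := by
    intro i w
    have := (aux_bounds _ (v - w) i).2
    have := aux_gpos _ w
    simp only [hF]
    gcongr
    nlinarith [sq_nonneg ‖w‖]
  have hFm : ∀ i, Measurable (F i) := by
    intro i
    have := aux_gmeas (d+1)
    simp only [hF]
    fun_prop
  have hFi : ∀ i, Integrable (F i) := fun i =>
    (H2 v).1.mono' (hFm i).aestronglyMeasurable (Filter.Eventually.of_forall fun w => by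
      rw [Real.norm_of_nonneg (hF0 i w)]; exact hFle i w)
  -- facts on the ball
  have hball : ∀ w ∈ Metric.ball p 1, ∀ i k, i ≠ k → ∀ q, 0 ≤ q → q ≤ (v - w) k ^ 2 →
      10 ^ (-|γ|) * m * (J ^ γ * q) ≤ F i w := by
    intro w hw i k hik q hq0 hq
    rw [Metric.mem_ball, dist_eq_norm] at hw
    have hwl := aux_abs _ (w - p) (Fin.last d)
    rw [PiLp.sub_apply, hpl] at hwl
    have hwl2 := abs_le.1 (hwl.trans hw.le)
    have hwn : ‖w‖ ≤ 5 := by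
      have : ‖w‖ ≤ ‖w - p‖ + ‖p‖ := by simpa using norm_add_le (w - p) p
      linarith
    have hz1 : J ≤ ‖v - w‖ := by
      have h1 := (le_abs_self _).trans (aux_abs _ (v - w) (Fin.last d))
      rw [PiLp.sub_apply, hvl] at h1
      linarith [hwl2.2]
    have hz2 : ‖v - w‖ ≤ 10 * J := by
      have := norm_sub_le v w
      rw [hvn] at this
      linarith
    have hz0 : 0 < ‖v - w‖ := by linarith
    have hpow := aux_rpow_lower γ J _ hJ0 hz1 hz2
    have hmu : m ≤ stdGaussian (d+1) w := by
      simp only [stdGaussian, hm]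
      gcongr
      nlinarith [norm_nonneg w]
    have h2 := aux_two _ (v - w) i k hik
    simp only [hF]
    rw [aux_entry _ _ _ _ hz0]
    calc 10 ^ (-|γ|) * m * (J ^ γ * q) = (10 ^ (-|γ|) * J ^ γ) * q * m := by ring
      _ ≤ _ := by
        have h3 : q ≤ ‖v - w‖ ^ 2 - (v - w) i ^ 2 := by linarith
        have h4 : 0 ≤ ‖v - w‖ ^ 2 - (v - w) i ^ 2 := hq0.trans h3
        gcongr
  have hwk : ∀ w ∈ Metric.ball p 1, J ^ 2 ≤ (v - w) (Fin.last d) ^ 2 ∧ 1 ≤ (v - w) 0 ^ 2 := by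
    intro w hw
    rw [Metric.mem_ball, dist_eq_norm] at hw
    have hwl := aux_abs _ (w - p) (Fin.last d)
    rw [PiLp.sub_apply, hpl] at hwl
    have hwl2 := abs_le.1 (hwl.trans hw.le)
    have hw0 := aux_abs _ (w - p) 0
    rw [PiLp.sub_apply, hp0] at hw0
    have hw02 := abs_le.1 (hw0.trans hw.le)
    rw [PiLp.sub_apply, PiLp.sub_apply, hvl, hvi 0 h0l]
    constructor
    · have : J ≤ r - w (Fin.last d) := by linarith [hwl2.2]
      gcongr
    · nlinarith [hw02.1]
  refine ⟨?_, ?_, ?_, ?_, ?_⟩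
  · intro i j hij
    by_cases h : i = Fin.last d
    · exact aux_offdiag _ γ v i j j hij (Or.inr rfl) (hvi j fun h' => hij (h.trans h'.symm))
    · exact aux_offdiag _ γ v i j i hij (Or.inl rfl) (hvi i h)
  · intro i j hi hj
    exact aux_diag _ γ v i j (hvi i hi) (hvi j hj)
  · intro i hi
    rw [hA]
    constructor
    · have := aux_setlower (F i) (hFi i) (hF0 i) p (10 ^ (-|γ|) * m * (J ^ γ * J ^ 2))
        (fun w hw => hball w hw i _ hi _ (by positivity) (hwk w hw).1)
      rw [hJ2]
      linarith
    · have h := (integral_mono (hFi i) (H2 v).1 (hFle i)).trans (H2 v).2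
      rw [hvn] at h
      refine h.trans ?_
      gcongr
      linarith
  · rw [hA]
    have := aux_setlower (F (Fin.last d)) (hFi _) (hF0 _) p (10 ^ (-|γ|) * m * (J ^ γ * 1))
        (fun w hw => hball w hw _ 0 h0l.symm _ zero_le_one (hwk w hw).2)
    linarith
  · rw [hA]
    have hae : ∀ᵐ w : EuclideanSpace ℝ (Fin (d+1)), w ≠ v := by
      simp [ae_iff, measure_singleton]
    have hle : ∀ᵐ w, F (Fin.last d) w ≤ ‖v - w‖ ^ γ * (1 + ‖w‖^2) * stdGaussian (d+1) w := by
      filter_upwards [hae] with w hw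
      have hz : 0 < ‖v - w‖ := norm_pos_iff.2 (sub_ne_zero.2 hw.symm)
      simp only [hF]
      rw [aux_entry _ _ _ _ hz]
      have := aux_gpos _ w
      have h3 : ‖v - w‖ ^ 2 - (v - w) (Fin.last d) ^ 2 ≤ 1 + ‖w‖ ^ 2 := by
        rw [EuclideanSpace.real_norm_sq_eq, EuclideanSpace.real_norm_sq_eq, Fin.sum_univ_castSucc,
          Fin.sum_univ_castSucc]
        have : ∀ l : Fin d, (v - w) l.castSucc ^ 2 = w l.castSucc ^ 2 := by
          intro l
          rw [PiLp.sub_apply, hvi _ (Fin.castSucc_lt_last l).ne]; ring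
        simp only [this]
        nlinarith [sq_nonneg (w (Fin.last d))]
      gcongr
    have h := (integral_mono_ae (hFi _) (H1 v).1 hle).trans (H1 v).2
    rw [hvn] at h
    refine h.trans ?_
    gcongr
    linarith
end

section
/- Let d ≥ 1, κ ∈ [0,d) and ρ ∈ (0, 1/2). Define 𝔠̃(a, ρ) = ∫₀^∞ exp(-(r-a)²/2) · r^{d-κ-1} · min{1, ρ²/r²} · (ra+1)^{-(d-2)/2} dr for a ≥ 0. Then 𝔠̃(a, ρ) ≤ C · ρ^{min{1, d-κ}} · (1+a)^{1-κ}, where C depends only on d and κ. -/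
open MeasureTheory Real Set

lemma aux_exp_s14 (N t : ℝ) (hN : 0 ≤ N) (ht : 0 ≤ t) :
    (1 + t) ^ N ≤ Real.exp (N ^ 2) * Real.exp (t ^ 2 / 4) := by
  calc (1 + t) ^ N ≤ (Real.exp t) ^ N := by
        apply Real.rpow_le_rpow (by linarith) _ hN
        linarith [Real.add_one_le_exp t]
    _ = Real.exp (t * N) := by rw [← Real.exp_mul]
    _ ≤ Real.exp (N ^ 2 + t ^ 2 / 4) := by
        apply Real.exp_le_exp.2
        nlinarith [sq_nonneg (N - t / 2)]
    _ = _ := Real.exp_add _ _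

lemma aux_cmp (x y M e : ℝ) (hx : 0 < x) (hy : 0 < y) (hM : 0 < M)
    (h1 : x ≤ M * y) (h2 : y ≤ M * x) : x ^ e ≤ M ^ |e| * y ^ e := by
  rcases le_total 0 e with he | he
  · rw [abs_of_nonneg he, ← Real.mul_rpow hM.le hy.le]
    exact Real.rpow_le_rpow hx.le h1 he
  · rw [abs_of_nonpos he]
    have h3 : y / M ≤ x := by rw [div_le_iff₀ hM]; linarith
    calc x ^ e ≤ (y / M) ^ e := Real.rpow_le_rpow_of_nonpos (by positivity) h3 he
      _ = _ := by rw [Real.div_rpow hy.le hM.le, Real.rpow_neg hM.le]; field_simp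

lemma aux_int (m : ℝ) (h0 : 0 < m) (h1 : m ≤ 1) :
    IntegrableOn (fun s : ℝ => s ^ (m - 1) * min 1 (1 / s ^ 2)) (Ioi 0) := by
  rw [← Ioc_union_Ioi_eq_Ioi (zero_le_one : (0:ℝ) ≤ 1)]
  apply IntegrableOn.union
  · have h : IntegrableOn (fun s : ℝ => s ^ (m - 1)) (Ioc 0 1) := by
      rw [← intervalIntegrable_iff_integrableOn_Ioc_of_le zero_le_one]
      exact intervalIntegral.intervalIntegrable_rpow' (by linarith)
    refine h.congr_fun (fun s hs => ?_) measurableSet_Ioc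
    have : (1:ℝ) ≤ 1 / s ^ 2 := by
      have := hs.1
      rw [le_div_iff₀ (by positivity)]
      nlinarith [hs.1, hs.2]
    simp only [min_eq_left this, mul_one]
  · have h : IntegrableOn (fun s : ℝ => s ^ (m - 3)) (Ioi 1) :=
      integrableOn_Ioi_rpow_of_lt (by linarith) one_pos
    refine h.congr_fun (fun s hs => ?_) measurableSet_Ioi
    have hs' : (1:ℝ) < s := hs
    have hs0 : (0:ℝ) < s := by linarith
    have : 1 / s ^ 2 ≤ (1:ℝ) := by
      rw [div_le_iff₀ (by positivity)]
      nlinarith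
    simp only [min_eq_right this]
    rw [show m - 3 = (m - 1) - (2:ℕ) by push_cast; ring, Real.rpow_sub_natCast hs0.ne']
    ring

lemma aux_scale (m ρ r : ℝ) (hρ : 0 < ρ) (hr : 0 < r) :
    r ^ (m - 1) * min 1 (ρ ^ 2 / r ^ 2) =
      ρ ^ (m - 1) * ((ρ⁻¹ * r) ^ (m - 1) * min 1 (1 / (ρ⁻¹ * r) ^ 2)) := by
  have h : 1 / (ρ⁻¹ * r) ^ 2 = ρ ^ 2 / r ^ 2 := by field_simp
  rw [h, Real.mul_rpow (by positivity) hr.le, Real.inv_rpow hρ.le]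
  have : ρ ^ (m - 1) ≠ 0 := (Real.rpow_pos_of_pos hρ _).ne'
  field_simp

/-- Region `r ≤ 1`. -/
lemma aux_small (e κ a r : ℝ) (he : e ≤ 1) (hκ : 0 ≤ κ) (ha : 0 ≤ a) (hr : 0 < r)
    (hr1 : r ≤ 1) :
    Real.exp (-(r - a) ^ 2 / 2) * (r * a + 1) ^ e ≤
      Real.exp (1 / 2) * Real.exp (κ ^ 2) * (1 + a) ^ (1 - κ) := by
  have h1 : Real.exp (-(r - a) ^ 2 / 2) ≤ Real.exp (1 / 2) * Real.exp (-(a ^ 2 / 4)) := by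
    rw [← Real.exp_add]
    apply Real.exp_le_exp.2
    nlinarith [sq_nonneg (a - 2 * r)]
  have h2 : (r * a + 1) ^ e ≤ 1 + a := by
    have hra : 0 ≤ r * a := by positivity
    calc (r * a + 1) ^ e ≤ (r * a + 1) ^ (1:ℝ) :=
          Real.rpow_le_rpow_of_exponent_le (by linarith) he
      _ = r * a + 1 := Real.rpow_one _
      _ ≤ 1 + a := by nlinarith
  have h3 := aux_exp_s14 κ a hκ ha
  have hp : 0 < (1 + a) ^ κ := Real.rpow_pos_of_pos (by linarith) _
  have h4 : Real.exp (-(a ^ 2 / 4)) ≤ Real.exp (κ ^ 2) / (1 + a) ^ κ := by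
    rw [le_div_iff₀ hp, Real.exp_neg, inv_mul_le_iff₀ (Real.exp_pos _)]
    linarith
  have hra : 0 ≤ (r * a + 1) ^ e := by positivity
  calc _ ≤ (Real.exp (1 / 2) * Real.exp (-(a ^ 2 / 4))) * (1 + a) := by gcongr
    _ ≤ (Real.exp (1 / 2) * (Real.exp (κ ^ 2) / (1 + a) ^ κ)) * (1 + a) := by gcongr
    _ = _ := by
      rw [Real.rpow_sub (by linarith), Real.rpow_one]; ring

/-- Region `r ≥ 1`. -/
lemma aux_large (e q κ a r : ℝ) (hq : q + 2 * e ≤ 1 - κ) (ha : 0 ≤ a) (hr : 1 ≤ r) :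
    Real.exp (-(r - a) ^ 2 / 2) * r ^ q * (r * a + 1) ^ e ≤
      4 ^ (|q| + |e|) * Real.exp ((|q| + |e|) ^ 2) * Real.exp (-(1/4) * (r - a) ^ 2)
        * (1 + a) ^ (1 - κ) := by
  set t := |r - a| with ht
  have ht0 : 0 ≤ t := abs_nonneg _
  have hra : r ≤ a + t := by linarith [le_abs_self (r - a)]
  have har : a ≤ r + t := by linarith [neg_abs_le (r - a)]
  have hsq : (r - a) ^ 2 = t ^ 2 := by rw [ht, sq_abs]
  have hN : 0 ≤ |q| + |e| := by positivity
  have hM : 0 < 4 * (1 + t) := by positivity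
  have b1 : r ^ q ≤ (4 * (1 + t)) ^ |q| * (1 + a) ^ q := by
    apply aux_cmp _ _ _ _ (by linarith) (by linarith) hM <;> nlinarith [mul_nonneg ht0 ha]
  have b2 : (r * a + 1) ^ e ≤ (4 * (1 + t)) ^ |e| * ((1 + a) ^ 2) ^ e := by
    apply aux_cmp _ _ _ _ (by positivity) (by positivity) hM
    · have : r * a ≤ (a + t) * a := by gcongr
      nlinarith [mul_nonneg ht0 ha, mul_nonneg ht0 (mul_nonneg ha ha)]
    · have hh : a ≤ r * (1 + t) := by nlinarith
      have : a * a ≤ r * (1 + t) * a := by gcongr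
      rcases le_total a 1 with h | h
      · have : 0 ≤ r * a * (1 + t) := by positivity
        nlinarith
      · nlinarith
  have b3 : ((1 + a) ^ 2) ^ e = (1 + a) ^ (2 * e) := by
    rw [← Real.rpow_natCast, ← Real.rpow_mul (by linarith)]; norm_num
  rw [b3] at b2
  have b4 : (1 + a) ^ (q + 2 * e) ≤ (1 + a) ^ (1 - κ) :=
    Real.rpow_le_rpow_of_exponent_le (by linarith) hq
  have b5 := aux_exp_s14 (|q| + |e|) t hN ht0
  have hr0 : 0 ≤ r := by linarith
  calc _ ≤ Real.exp (-(r - a) ^ 2 / 2) * ((4 * (1 + t)) ^ |q| * (1 + a) ^ q) *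
        ((4 * (1 + t)) ^ |e| * (1 + a) ^ (2 * e)) := by gcongr
    _ = Real.exp (-(r - a) ^ 2 / 2) * (4 ^ (|q| + |e|) * (1 + t) ^ (|q| + |e|)) *
        (1 + a) ^ (q + 2 * e) := by
      rw [← Real.mul_rpow (by norm_num) (by linarith), Real.rpow_add hM,
        Real.rpow_add (by linarith : 0 < 1 + a)]
      ring
    _ ≤ Real.exp (-(r - a) ^ 2 / 2) * (4 ^ (|q| + |e|) *
        (Real.exp ((|q| + |e|) ^ 2) * Real.exp (t ^ 2 / 4))) * (1 + a) ^ (1 - κ) := by gcongr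
    _ = 4 ^ (|q| + |e|) * Real.exp ((|q| + |e|) ^ 2) *
        (Real.exp (-(r - a) ^ 2 / 2) * Real.exp (t ^ 2 / 4)) * (1 + a) ^ (1 - κ) := by ring
    _ = _ := by
      rw [← Real.exp_add, hsq, neg_div]
      congr 3
      rw [show -(t ^ 2 / 2) + t ^ 2 / 4 = -(1/4) * t ^ 2 by ring]

/-- Upper bound `𝔠̃(a,ρ) ≤ C ρ^{min{1,d-κ}} (1+a)^{1-κ}` for the small-scale error of the
Carleman coefficient. -/
theorem stmt14 (d : ℕ) (hd : 1 ≤ d) (κ : ℝ) (hκ0 : 0 ≤ κ) (hκd : κ < d) :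
    ∃ C : ℝ, 0 < C ∧ ∀ ρ ∈ Set.Ioo (0:ℝ) (1/2), ∀ a : ℝ, 0 ≤ a →
      (∫ r in Set.Ioi (0:ℝ),
          Real.exp (-(r - a) ^ 2 / 2) * r ^ ((d:ℝ) - κ - 1) * min 1 (ρ ^ 2 / r ^ 2) *
            (r * a + 1) ^ (-((d:ℝ) - 2) / 2)) ≤
        C * ρ ^ (min 1 ((d:ℝ) - κ)) * (1 + a) ^ (1 - κ) := by
  have hd' : (1:ℝ) ≤ d := by exact_mod_cast hd
  set m := min 1 ((d:ℝ) - κ) with hm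
  have hm0 : 0 < m := lt_min one_pos (by linarith)
  have hm1 : m ≤ 1 := min_le_left _ _
  have hmp : m ≤ (d:ℝ) - κ := min_le_right _ _
  set e := -((d:ℝ) - 2) / 2 with he
  have he1 : e ≤ 1 := by rw [he]; linarith
  set q := (d:ℝ) - κ - 3 with hq
  have hqe : q + 2 * e ≤ 1 - κ := by rw [he, hq]; linarith
  set A := (4:ℝ) ^ (|q| + |e|) * Real.exp ((|q| + |e|) ^ 2) with hA
  have hA0 : 0 < A := by positivity
  set B := Real.exp (1 / 2) * Real.exp (κ ^ 2) with hB
  have hB0 : 0 < B := by positivity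
  set h : ℝ → ℝ := fun s => s ^ (m - 1) * min 1 (1 / s ^ 2) with hh
  have hint := aux_int m hm0 hm1
  have hgint : Integrable (fun x : ℝ => Real.exp (-(1/4) * x ^ 2)) :=
    integrable_exp_neg_mul_sq (by norm_num)
  set K := ∫ s in Ioi (0:ℝ), h s with hK
  set G := ∫ x : ℝ, Real.exp (-(1/4) * x ^ 2) with hG
  have hK0 : 0 ≤ K := setIntegral_nonneg measurableSet_Ioi (fun s hs => by
    have : (0:ℝ) < s := hs
    simp only [hh]; positivity)
  have hG0 : 0 ≤ G := integral_nonneg (fun x => (Real.exp_pos _).le)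
  refine ⟨A * G + B * K + 1, by positivity, ?_⟩
  rintro ρ ⟨hρ0, hρ1⟩ a ha
  set W := (1 + a) ^ (1 - κ) with hW
  have hW0 : 0 < W := Real.rpow_pos_of_pos (by linarith) _
  have hρm : 0 < ρ ^ m := Real.rpow_pos_of_pos hρ0 _
  have hgint' : Integrable (fun r : ℝ => Real.exp (-(1/4) * (r - a) ^ 2)) :=
    hgint.comp_sub_right a
  have hint' : IntegrableOn (fun r : ℝ => h (ρ⁻¹ * r)) (Ioi 0) := by
    have := (integrableOn_Ioi_comp_mul_left_iff h 0 (inv_pos.2 hρ0)).2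
    rw [mul_zero] at this
    exact this hint
  have i1 : IntegrableOn (fun r : ℝ => A * W * ρ ^ m * Real.exp (-(1/4) * (r - a) ^ 2)) (Ioi 0) :=
    (hgint'.const_mul _).integrableOn
  have i2 : IntegrableOn (fun r : ℝ => B * W * ρ ^ (m - 1) * h (ρ⁻¹ * r)) (Ioi 0) :=
    hint'.const_mul _
  have key : (∫ r in Set.Ioi (0:ℝ),
          Real.exp (-(r - a) ^ 2 / 2) * r ^ ((d:ℝ) - κ - 1) * min 1 (ρ ^ 2 / r ^ 2) *
            (r * a + 1) ^ e) ≤ ∫ r in Set.Ioi (0:ℝ),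
      (A * W * ρ ^ m * Real.exp (-(1/4) * (r - a) ^ 2) +
        B * W * ρ ^ (m - 1) * h (ρ⁻¹ * r)) := by
    apply integral_mono_of_nonneg
    · filter_upwards [ae_restrict_mem measurableSet_Ioi] with r hr
      have : (0:ℝ) < r := hr
      simp only [Pi.zero_apply]
      positivity
    · exact i1.add i2
    · filter_upwards [ae_restrict_mem measurableSet_Ioi] with r hr
      have hr0 : (0:ℝ) < r := hr
      have hs := aux_scale m ρ r hρ0 hr0
      have hn1 : 0 ≤ A * W * ρ ^ m * Real.exp (-(1/4) * (r - a) ^ 2) := by positivity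
      have hn2 : 0 ≤ B * W * ρ ^ (m - 1) * h (ρ⁻¹ * r) := by
        simp only [hh]; positivity
      rcases le_total r 1 with h1 | h1
      · have hsm := aux_small e κ a r he1 hκ0 ha hr0 h1
        have hpw : r ^ ((d:ℝ) - κ - 1) ≤ r ^ (m - 1) :=
          Real.rpow_le_rpow_of_exponent_ge hr0 h1 (by linarith)
        have hmin : 0 ≤ min 1 (ρ ^ 2 / r ^ 2) := by positivity
        calc _ = (Real.exp (-(r - a) ^ 2 / 2) * (r * a + 1) ^ e) *
              (r ^ ((d:ℝ) - κ - 1) * min 1 (ρ ^ 2 / r ^ 2)) := by ring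
          _ ≤ (B * W) * (r ^ (m - 1) * min 1 (ρ ^ 2 / r ^ 2)) := by gcongr
          _ = B * W * ρ ^ (m - 1) * h (ρ⁻¹ * r) := by rw [hs]; ring
          _ ≤ _ := by linarith
      · have hlg := aux_large e q κ a r hqe ha h1
        have hρ2 : ρ ^ 2 ≤ ρ ^ m := by
          rw [← Real.rpow_natCast]
          exact Real.rpow_le_rpow_of_exponent_ge hρ0 (by linarith) (by push_cast; linarith)
        have hpw : r ^ ((d:ℝ) - κ - 1) = r ^ q * r ^ 2 := by
          rw [← Real.rpow_natCast, ← Real.rpow_add hr0]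
          congr 1; rw [hq]; push_cast; ring
        have hmin : min 1 (ρ ^ 2 / r ^ 2) ≤ ρ ^ m / r ^ 2 :=
          (min_le_right _ _).trans (by gcongr)
        calc _ ≤ Real.exp (-(r - a) ^ 2 / 2) * (r ^ q * r ^ 2) * (ρ ^ m / r ^ 2) *
              (r * a + 1) ^ e := by rw [hpw]; gcongr
          _ = ρ ^ m * (Real.exp (-(r - a) ^ 2 / 2) * r ^ q * (r * a + 1) ^ e) := by field_simp
          _ ≤ ρ ^ m * (A * Real.exp (-(1/4) * (r - a) ^ 2) * W) := by gcongr
          _ = A * W * ρ ^ m * Real.exp (-(1/4) * (r - a) ^ 2) := by ring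
          _ ≤ _ := by linarith
  refine key.trans ?_
  rw [integral_add i1 i2, integral_const_mul, integral_const_mul,
    integral_comp_mul_left_Ioi h 0 (inv_pos.2 hρ0), mul_zero, ← hK]
  have hGle : ∫ r in Ioi (0:ℝ), Real.exp (-(1/4) * (r - a) ^ 2) ≤ G := by
    calc _ ≤ ∫ r : ℝ, Real.exp (-(1/4) * (r - a) ^ 2) :=
          setIntegral_le_integral hgint' (Filter.Eventually.of_forall fun x => (Real.exp_pos _).le)
      _ = G := integral_sub_right_eq_self (fun x : ℝ => Real.exp (-(1/4) * x ^ 2)) a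
  have hρs : ρ ^ (m - 1) * ρ = ρ ^ m := by
    rw [Real.rpow_sub_one hρ0.ne']; field_simp
  calc _ ≤ A * W * ρ ^ m * G + B * W * ρ ^ (m - 1) * (ρ⁻¹⁻¹ • K) := by gcongr
    _ = (A * G + B * K) * ρ ^ m * W := by
      rw [inv_inv, smul_eq_mul, ← hρs]; ring
    _ ≤ (A * G + B * K + 1) * ρ ^ m * W := by
      have : 0 ≤ ρ ^ m * W := by positivity
      nlinarith
end
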